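/- Every distance-regular graph with diameter 3 and intersection array {13,8,1;1,4,13} contains a 4-claw. -/

import Mathlib

open SimpleGraph Finset

/-!
Suppose there is no 4-claw.

The graph has no 5-clique (`no_five_clique`): for a 5-clique `C`, let `n v` be the number of
neighbours of `v` in `C`. Counting gives `∑ n v = 65` and `∑ (n v)^2 = 145` over the
42 vertices, hence `∑ (n v - 1) (n v - 2) = 34`. All summands are nonnegative, the 5 vertices of `C`
contribute `3 * 2` each, and the 10 vertices at distance 3 from a member of `C` have `n v = 0` and
contribute `2` each, for a total of at least `50`.

The subgraph induced on the neighbourhood of a vertex `x` is 4-regular on 13 vertices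
(`card_common`). Fix `y` in it, let `A` be its set of 4 neighbours there, and `B` the set of the
8 vertices other than `y` not adjacent to `y`. For `z` in `B`, the vertices of `B` other than `z`
not adjacent to `z` form a clique (otherwise `x` is the centre of a 4-claw), so there are at most 3
of them, since `x` extends this clique; hence all 4 neighbours of `z` lie in `B` and there is no
edge between `A` and `B`. By 4-regularity `A` is a clique, and `A` together with `y` is a 5-clique,
a contradiction.
-/

/-- `G` is a distance-regular graph with diameter `D` and intersection numbers
`b i` (number of neighbours of `y` at distance `i+1` from `x` when `dist x y = i`) and
`c i` (number of neighbours of `y` at distance `i-1` from `x` when `dist x y = i`). -/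
def IsDRG {V : Type*} [Fintype V] (G : SimpleGraph V) (D : ℕ) (b c : ℕ → ℕ) : Prop :=
  G.Connected ∧
  (∃ x y : V, G.dist x y = D) ∧
  (∀ x y : V, G.dist x y ≤ D) ∧
  c 0 = 0 ∧ c 1 = 1 ∧ b D = 0 ∧
  (∀ i ≤ D, ∀ x y : V, G.dist x y = i →
    {z : V | G.Adj y z ∧ G.dist x z = i - 1}.ncard = c i ∧
    {z : V | G.Adj y z ∧ G.dist x z = i + 1}.ncard = b i)

/-- `G` contains a `t`-claw: a vertex together with `t` pairwise nonadjacent neighbours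
(an induced `K_{1,t}`). -/
def HasClaw {V : Type*} (G : SimpleGraph V) (t : ℕ) : Prop :=
  ∃ (x : V) (s : Finset V), s.card = t ∧ (∀ y ∈ s, G.Adj x y) ∧
    (s : Set V).Pairwise fun y z => ¬ G.Adj y z

/-- `θ` is an eigenvalue of the (real) adjacency matrix of `G`. -/
def IsAdjEigenvalue {V : Type*} [Fintype V] (G : SimpleGraph V) [DecidableRel G.Adj]
    (θ : ℝ) : Prop :=
  ∃ v : V → ℝ, v ≠ 0 ∧ (G.adjMatrix ℝ).mulVec v = θ • v

/-- `G` contains an induced quadrangle: vertices `x, z₁, y, z₂` with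
`dist x y = dist z₁ z₂ = 2` inducing a 4-cycle. -/
def HasQuadrangle {V : Type*} (G : SimpleGraph V) : Prop :=
  ∃ x z₁ y z₂ : V, G.dist x y = 2 ∧ G.dist z₁ z₂ = 2 ∧
    G.Adj x z₁ ∧ G.Adj z₁ y ∧ G.Adj y z₂ ∧ G.Adj z₂ x

/-- The diameter-3 intersection array `{β₀,β₁,β₂; γ₁,γ₂,γ₃}`. -/
def arr3 (b c : ℕ → ℕ) (β₀ β₁ β₂ γ₁ γ₂ γ₃ : ℕ) : Prop :=
  b 0 = β₀ ∧ b 1 = β₁ ∧ b 2 = β₂ ∧ c 1 = γ₁ ∧ c 2 = γ₂ ∧ c 3 = γ₃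

/-! ### Vertex counts -/

open scoped Classical in
/-- The defining counts of a distance-regular graph, with `Finset.card` in place of `Set.ncard`. -/
theorem drg_counts {V : Type*} [Fintype V] (G : SimpleGraph V) (b c : ℕ → ℕ)
    (hdrg : IsDRG G 3 b c) :
    (∀ x i, i ≤ 3 → ∀ y, G.dist x y = i →
      #{z | G.Adj y z ∧ G.dist x z = i - 1} = c i ∧
      #{z | G.Adj y z ∧ G.dist x z = i + 1} = b i) := by
  intro x i hi y hxy
  obtain ⟨-, -, -, -, -, -, h⟩ := hdrg
  have := h i hi x y hxy
  simpa [Set.ncard_eq_toFinset_card'] using this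

open scoped Classical in
theorem card_nbr {V : Type*} [Fintype V] (G : SimpleGraph V) (b c : ℕ → ℕ)
    (hdrg : IsDRG G 3 b c) (harr : arr3 b c 13 8 1 1 4 13) (x : V) :
    #{z | G.Adj x z} = 13 := by
  have h := (drg_counts G b c hdrg x 0 (by norm_num) x (by simp)).2
  rw [harr.1] at h
  rw [← h]
  congr 1
  ext z
  simp

open scoped Classical in
/-- Adjacent vertices have `a₁ = 13 - 8 - 1 = 4` common neighbours. -/
theorem card_common {V : Type*} [Fintype V] (G : SimpleGraph V) (b c : ℕ → ℕ)
    (hdrg : IsDRG G 3 b c) (harr : arr3 b c 13 8 1 1 4 13) (x y : V) (hxy : G.Adj x y) :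
    #{z | G.Adj x z ∧ G.Adj y z} = 4 := by
  have h := drg_counts G b c hdrg x 1 (by norm_num) y (by simpa using hxy)
  have hk := card_nbr G b c hdrg harr y
  rw [harr.2.1, harr.2.2.2.1] at h
  have hconn := hdrg.1
  have hpart : ({z | G.Adj y z} : Finset V) =
      ({z | G.Adj y z ∧ G.dist x z = 1 - 1} : Finset V) ∪
      ({z | G.Adj x z ∧ G.Adj y z} : Finset V) ∪
      ({z | G.Adj y z ∧ G.dist x z = 1 + 1} : Finset V) := by
    ext z
    simp only [mem_filter, mem_univ, true_and, mem_union, ← dist_eq_one_iff_adj (u := x)]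
    constructor
    · intro hz
      have h1 : G.dist x z ≤ G.dist x y + G.dist y z := hconn.dist_triangle
      rw [dist_eq_one_iff_adj.2 hxy, dist_eq_one_iff_adj.2 hz] at h1
      have : G.dist x z = 0 ∨ G.dist x z = 1 ∨ G.dist x z = 2 := by omega
      tauto
    · tauto
  rw [hpart, card_union_of_disjoint, card_union_of_disjoint] at hk
  · omega
  · rw [Finset.disjoint_left]
    intro z
    simp only [mem_filter, mem_univ, true_and, ← dist_eq_one_iff_adj (u := x)]
    omega
  · rw [Finset.disjoint_left]
    intro z
    simp only [mem_filter, mem_univ, true_and, mem_union, ← dist_eq_one_iff_adj (u := x)]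
    omega

open scoped Classical in
/-- There are `1 + 13 + 26 + 2` vertices at distance `0, 1, 2, 3` from `x`, by double counting the edges between
consecutive distance layers. -/
theorem card_layers {V : Type*} [Fintype V] (G : SimpleGraph V) (b c : ℕ → ℕ)
    (hdrg : IsDRG G 3 b c) (harr : arr3 b c 13 8 1 1 4 13) (x : V) :
    #{z | G.dist x z = 3} = 2 ∧ Fintype.card V = 42 := by
  have hD := drg_counts G b c hdrg x
  have hk := card_nbr G b c hdrg harr x
  obtain ⟨-, hb1, hb2, -, hc2, hc3⟩ := harr
  have e1 : #{z | G.dist x z = 1} = 13 := by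
    simpa [dist_eq_one_iff_adj] using hk
  have key : ∀ i m n, i ≤ 2 → b i = m → c (i + 1) = n →
      #{z | G.dist x z = i} * m = #{z | G.dist x z = i + 1} * n := by
    intro i m n hi hm hn
    apply card_mul_eq_card_mul G.Adj
    · intro y hy
      rw [← hm, ← (hD i (by omega) y (by simpa using hy)).2]
      congr 1
      ext z
      simp [bipartiteAbove, and_comm]
    · intro y hy
      rw [← hn, ← (hD (i + 1) (by omega) y (by simpa using hy)).1]
      congr 1
      ext z
      simp [bipartiteBelow, and_comm, G.adj_comm y z]
  have k1 := key 1 8 4 (by norm_num) hb1 hc2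
  have k2 := key 2 1 13 (by norm_num) hb2 hc3
  norm_num at k1 k2
  have e0 : #{z | G.dist x z = 0} = 1 := by
    rw [card_eq_one]
    refine ⟨x, ?_⟩
    ext z
    simp [hdrg.1.dist_eq_zero_iff, eq_comm]
  have hV := card_eq_sum_card_fiberwise (s := (univ : Finset V)) (t := range 4)
    (f := fun z => G.dist x z) (by
      intro z _
      have := hdrg.2.2.1 x z
      simp only [coe_range, Set.mem_Iio]
      omega)
  simp only [sum_range_succ, range_zero, sum_empty] at hV
  rw [card_univ] at hV
  omega

open scoped Classical in
/-- All neighbours of an antipode of `x` are at distance 2 from `x`, because `c₃ = 13 = k`. -/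
theorem dist_of_adj_antipode {V : Type*} [Fintype V] (G : SimpleGraph V) (b c : ℕ → ℕ)
    (hdrg : IsDRG G 3 b c) (harr : arr3 b c 13 8 1 1 4 13) (x y z : V)
    (hxy : G.dist x y = 3) (hyz : G.Adj y z) : G.dist x z = 2 := by
  have h := (drg_counts G b c hdrg x 3 le_rfl y hxy).1
  have hk := card_nbr G b c hdrg harr y
  rw [harr.2.2.2.2.2] at h
  have heq : ({z | G.Adj y z ∧ G.dist x z = 3 - 1} : Finset V) =
      ({z | G.Adj y z} : Finset V) := by
    apply eq_of_subset_of_card_le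
    · intro z
      simp only [mem_filter, mem_univ, true_and]
      tauto
    · omega
  have : z ∈ ({z | G.Adj y z} : Finset V) := by simpa using hyz
  rw [← heq] at this
  simpa using (mem_filter.1 this).2.2

/-! ### Cliques -/

open scoped Classical in
/-- The integer form of the Delsarte clique bound, obtained from `(n - 1) * (n - 2) ≥ 0`. -/
theorem no_five_clique {V : Type*} [Fintype V] (G : SimpleGraph V) (b c : ℕ → ℕ)
    (hdrg : IsDRG G 3 b c) (harr : arr3 b c 13 8 1 1 4 13) (C : Finset V)
    (hC : #C = 5) (hcl : ∀ x ∈ C, ∀ y ∈ C, x ≠ y → G.Adj x y) : False := by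
  have hk := card_nbr G b c hdrg harr
  have hcom := card_common G b c hdrg harr
  have hlay := card_layers G b c hdrg harr
  have hanti := dist_of_adj_antipode G b c hdrg harr
  let n : V → ℤ := fun v => ∑ x ∈ C, if G.Adj x v then 1 else 0
  have s1 : ∑ v, n v = 65 := by
    simp only [n]
    rw [sum_comm]
    have : ∀ x ∈ C, (∑ v, if G.Adj x v then (1 : ℤ) else 0) = 13 := by
      intro x _
      simp [hk x]
    rw [sum_congr rfl this]
    simp [hC]
  have s2 : ∑ v, n v * n v = 145 := by
    simp only [n, sum_mul_sum]
    rw [sum_comm]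
    have : ∀ x ∈ C, (∑ v, ∑ y ∈ C,
        (if G.Adj x v then (1 : ℤ) else 0) * (if G.Adj y v then 1 else 0)) = 29 := by
      intro x hx
      rw [sum_comm]
      have h2 : ∀ y ∈ C, (∑ v, (if G.Adj x v then (1 : ℤ) else 0) * (if G.Adj y v then 1 else 0))
          = 4 + if x = y then 9 else 0 := by
        intro y hy
        have h3 : (∑ v, (if G.Adj x v then (1 : ℤ) else 0) * (if G.Adj y v then 1 else 0))
            = (#{v | G.Adj x v ∧ G.Adj y v} : ℤ) := by
          rw [card_filter]
          push_cast
          apply sum_congr rfl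
          intro v _
          by_cases h1 : G.Adj x v <;> by_cases h2 : G.Adj y v <;> simp [h1, h2]
        rw [h3]
        split_ifs with h
        · subst h
          simp [hk x]
        · simp [hcom x y (hcl x hx y hy h)]
      rw [sum_congr rfl h2, sum_add_distrib]
      simp [hC, hx]
    rw [sum_congr rfl this]
    simp [hC]
  have s3 : ∑ v, (n v - 1) * (n v - 2) = 34 := by
    have : ∀ v, (n v - 1) * (n v - 2) = n v * n v - 3 * n v + 2 := fun v => by ring
    simp only [this, sum_add_distrib, sum_sub_distrib, ← mul_sum, s1, s2]
    obtain ⟨x, -⟩ := card_pos.1 (by omega : 0 < #C)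
    simp [(hlay x).2]
  -- `A` is the set of vertices antipodal to a member of `C`.
  let A : Finset V := C.biUnion fun x => {z | G.dist x z = 3}
  have hAC : ∀ z, ∀ x ∈ C, G.dist x z = 3 → ∀ y ∈ C, x ≠ y → G.dist y z = 2 := by
    intro z x hx hz y hy hxy
    rw [dist_comm] at hz ⊢
    exact hanti z x y hz (hcl x hx y hy hxy)
  have hA : #A = 10 := by
    rw [card_biUnion]
    · rw [sum_congr rfl (fun x _ => (hlay x).1)]
      simp [hC]
    · intro x hx y hy hxy
      rw [Function.onFun, Finset.disjoint_left]
      intro z hz hz'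
      simp only [mem_filter, mem_univ, true_and] at hz hz'
      have := hAC z x hx hz y hy hxy
      omega
  have nC : ∀ v ∈ C, n v = 4 := by
    intro v hv
    have : ∀ x ∈ C, (if G.Adj x v then (1 : ℤ) else 0) = 1 - if v = x then 1 else 0 := by
      intro x hx
      by_cases h : v = x
      · simp [h]
      · simp [h, hcl x hx v hv (Ne.symm h)]
    simp only [n]
    rw [sum_congr rfl this]
    simp [hC, hv]
  have nA : ∀ v ∈ A, n v = 0 := by
    intro v hv
    simp only [A, mem_biUnion, mem_filter, mem_univ, true_and] at hv
    obtain ⟨x, hx, hxv⟩ := hv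
    apply sum_eq_zero
    intro y hy
    rw [if_neg]
    intro hadj
    rw [← dist_eq_one_iff_adj] at hadj
    by_cases h : x = y
    · subst h
      omega
    · have := hAC v x hx hxv y hy h
      omega
  have hdisj : Disjoint C A := by
    rw [Finset.disjoint_left]
    intro v hv hv'
    have h1 := nC v hv
    have h2 := nA v hv'
    omega
  have hle : ∑ v ∈ C ∪ A, (n v - 1) * (n v - 2) ≤ ∑ v, (n v - 1) * (n v - 2) := by
    apply sum_le_sum_of_subset_of_nonneg (subset_univ _)
    intro v _ _
    rcases le_or_gt (n v) 1 with h | h <;> nlinarith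
  rw [sum_union hdisj, sum_congr rfl (fun v hv => by rw [nC v hv]),
    sum_congr (s₁ := A) rfl (fun v hv => by rw [nA v hv]), s3] at hle
  simp [hC, hA] at hle

/-! ### The local graph -/

/-- every DRG of diameter 3 with intersection array `{13,8,1;1,4,13}`
contains a 4-claw. -/
theorem statement17 {V : Type*} [Fintype V] (G : SimpleGraph V) (b c : ℕ → ℕ)
    (hdrg : IsDRG G 3 b c) (harr : arr3 b c 13 8 1 1 4 13) :
    HasClaw G 4 := by
  classical
  have hk := card_nbr G b c hdrg harr
  have hcom := card_common G b c hdrg harr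
  have hno := no_five_clique G b c hdrg harr
  by_contra hclaw
  obtain ⟨x, -⟩ := hdrg.2.1
  obtain ⟨y, hy⟩ := card_pos.1 (by rw [hk x]; norm_num : 0 < #{z | G.Adj x z})
  replace hy : G.Adj x y := by simpa using hy
  let A : Finset V := {z | G.Adj x z ∧ G.Adj y z}
  have hA : #A = 4 := hcom x y hy
  let B : Finset V := {z | G.Adj x z ∧ z ≠ y ∧ ¬ G.Adj y z}
  have hB : #B = 8 := by
    have hpart : ({z | G.Adj x z} : Finset V) = insert y (A ∪ B) := by
      ext z
      simp only [A, B, mem_filter, mem_univ, true_and, mem_insert, mem_union]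
      by_cases h : z = y
      · simp [h, hy]
      · tauto
    have h13 := hk x
    rw [hpart, card_insert_of_notMem (by simp [A, B]), card_union_of_disjoint] at h13
    · omega
    · rw [Finset.disjoint_left]
      intro z
      simp only [A, B, mem_filter, mem_univ, true_and]
      tauto
  have hAB : ∀ z ∈ B, ∀ w ∈ A, ¬ G.Adj z w := by
    intro z hz w hw hzw
    have hzB : G.Adj x z ∧ z ≠ y ∧ ¬ G.Adj y z := by simpa [B] using hz
    have hw' : G.Adj x w ∧ G.Adj y w := by simpa [A] using hw
    obtain ⟨hxz, hzy, hyz⟩ := hzB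
    -- The neighbours and the non-neighbours of `z` within `B`.
    let P : Finset V := B.filter fun u => G.Adj z u
    let Q : Finset V := B.filter fun u => u ≠ z ∧ ¬ G.Adj z u
    have hP : #P < 4 := by
      rw [← hcom x z hxz]
      apply card_lt_card
      refine ⟨fun u hu => ?_, fun hsub => ?_⟩
      · simp only [P, B, mem_filter, mem_univ, true_and] at hu ⊢
        tauto
      · have : w ∈ P := hsub (by simp [hw'.1, hzw])
        simp [P, B, hw'.2] at this
    have hQ : 4 ≤ #Q := by
      have hpart : B = insert z (P ∪ Q) := by
        ext u
        simp only [P, Q, mem_filter, mem_insert, mem_union]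
        by_cases h : u = z
        · simp [h, hz]
        · tauto
      have h8 := hB
      rw [hpart] at h8
      have h1 := card_insert_le z (P ∪ Q)
      have h2 := card_union_le P Q
      omega
    obtain ⟨R, hRQ, hR⟩ := exists_subset_card_eq hQ
    have hmem : ∀ u ∈ R, G.Adj x u ∧ u ≠ y ∧ ¬ G.Adj y u ∧ u ≠ z ∧ ¬ G.Adj z u := by
      intro u hu
      have := hRQ hu
      simp only [Q, B, mem_filter, mem_univ, true_and] at this
      tauto
    apply hno (insert x R)
    · rw [card_insert_of_notMem, hR]
      intro h
      exact G.loopless.irrefl x (hmem x h).1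
    · -- Two non-adjacent members of `R` would form a 4-claw with `y` and `z`, centred at `x`.
      have hRcl : ∀ u ∈ R, ∀ v ∈ R, u ≠ v → G.Adj u v := by
        intro u hu v hv huv
        by_contra hnadj
        obtain ⟨hu1, hu2, hu3, hu4, hu5⟩ := hmem u hu
        obtain ⟨hv1, hv2, hv3, hv4, hv5⟩ := hmem v hv
        apply hclaw
        refine ⟨x, {y, z, u, v}, ?_, ?_, ?_⟩
        · rw [card_insert_of_notMem, card_insert_of_notMem, card_pair huv]
          · simp [Ne.symm hu4, Ne.symm hv4]
          · simp [Ne.symm hzy, Ne.symm hu2, Ne.symm hv2]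
        · intro t ht
          simp only [mem_insert, mem_singleton] at ht
          rcases ht with rfl | rfl | rfl | rfl <;> assumption
        · intro s hs t ht _
          simp only [coe_insert, coe_singleton, Set.mem_insert_iff, Set.mem_singleton_iff] at hs ht
          rcases hs with rfl | rfl | rfl | rfl <;> rcases ht with rfl | rfl | rfl | rfl <;>
            first
            | exact G.loopless.irrefl _
            | assumption
            | (rw [G.adj_comm]; assumption)
      intro u hu v hv huv
      rcases mem_insert.1 hu with rfl | huR
      · rcases mem_insert.1 hv with rfl | hvR
        · exact absurd rfl huv
        · exact (hmem v hvR).1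
      · rcases mem_insert.1 hv with rfl | hvR
        · exact (hmem u huR).1.symm
        · exact hRcl u huR v hvR huv
  have hAcl : ∀ u ∈ A, ∀ v ∈ A, u ≠ v → G.Adj u v := by
    intro u hu v hv huv
    by_contra hnadj
    have hu' : G.Adj x u ∧ G.Adj y u := by simpa [A] using hu
    -- The four neighbours of `u` in the local graph at `x` lie among `y` and two members of `A`.
    have hsub : ({t | G.Adj x t ∧ G.Adj u t} : Finset V) ⊆ insert y ((A.erase u).erase v) := by
      intro t ht
      simp only [mem_filter, mem_univ, true_and] at ht
      by_cases hty : t = y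
      · simp [hty]
      by_cases htA : G.Adj y t
      · have h1 : t ≠ u := ht.2.ne'
        have h2 : t ≠ v := by
          rintro rfl
          exact hnadj ht.2
        simp [A, h1, h2, ht.1, htA]
      · exact absurd ht.2.symm (hAB t (by simp [B, ht.1, hty, htA]) u hu)
    have h1 := card_le_card hsub
    have h2 := card_insert_le y ((A.erase u).erase v)
    rw [hcom x u hu'.1] at h1
    rw [card_erase_of_mem (mem_erase.2 ⟨Ne.symm huv, hv⟩), card_erase_of_mem hu] at h2
    omega
  have hyA : ∀ u ∈ A, G.Adj y u := by
    intro u hu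
    exact (mem_filter.1 hu).2.2
  apply hno (insert y A)
  · rw [card_insert_of_notMem, hA]
    intro h
    exact G.loopless.irrefl y (hyA y h)
  · intro u hu v hv huv
    rcases mem_insert.1 hu with rfl | huA
    · rcases mem_insert.1 hv with rfl | hvA
      · exact absurd rfl huv
      · exact hyA v hvA
    · rcases mem_insert.1 hv with rfl | hvA
      · exact (hyA u huA).symm
      · exact hAcl u huA v hvA huv
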